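/- arXiv:2212.14003 — 2 statements merged into one kernel-verified Lean document; each statement's English description precedes it below -/
import Mathlib

section
/- Let D be a nonempty closed convex subset of ℝ^N with 0 ∈ D. Let a_0, …, a_{k−1} ≥ 0, let F^0, …, F^{k−1} ∈ ℝ^N with ‖F^j‖ ≤ L_b for all j < k, and let λ^0 ∈ D with λ^{j+1} := P_D[λ^j + a_j F^j] for j < k. Then − Σ_{j=0}^{k−1} a_j ⟨λ^j, F^j⟩ ≤ (1/2)‖λ^0‖² + (1/2) L_b² Σ_{j=0}^{k−1} a_j². -/
open scoped RealInnerProductSpace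

/-!
Projecting onto a set that is star-shaped about `c` never increases the distance to `c`. Hence
`‖λ^{j+1} - c‖² ≤ ‖λ^j + a_j F^j - c‖² = ‖λ^j - c‖² + 2 a_j ⟪λ^j - c, F^j⟫ + a_j² ‖F^j‖²`,
and summing over `j < k` telescopes the distances to `c`. The bound wanted is the case `c = 0`,
where the leftover term `‖λ^k‖²` is dropped.
-/

section StarConvex

variable {E : Type*} [NormedAddCommGroup E] [InnerProductSpace ℝ E] {D : Set E} {c u v : E}

theorem real_inner_sub_sub_nonpos_of_forall_norm_sub_le (hD : StarConvex ℝ c D) (hv : v ∈ D)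
    (hmin : ∀ w ∈ D, ‖v - u‖ ≤ ‖w - u‖) : ⟪u - v, c - v⟫ ≤ 0 := by
  -- Only the segment from `c` to `v` matters, and it is convex even when `D` is not.
  have hv_seg : v ∈ segment ℝ c v := right_mem_segment ℝ c v
  have : Nonempty (segment ℝ c v) := ⟨⟨v, hv_seg⟩⟩
  have hdist : ‖u - v‖ = ⨅ w : segment ℝ c v, ‖u - w‖ := by
    refine le_antisymm (le_ciInf fun w ↦ ?_) (ciInf_le ⟨0, ?_⟩ (⟨v, hv_seg⟩ : segment ℝ c v))
    · simpa only [norm_sub_rev u] using hmin w (hD.segment_subset hv w.2)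
    · rintro _ ⟨w, rfl⟩
      exact norm_nonneg _
  exact (norm_eq_iInf_iff_real_inner_le_zero (convex_segment c v) hv_seg).1 hdist c
    (left_mem_segment ℝ c v)

theorem norm_sub_le_norm_sub_of_forall_norm_sub_le (hD : StarConvex ℝ c D) (hv : v ∈ D)
    (hmin : ∀ w ∈ D, ‖v - u‖ ≤ ‖w - u‖) : ‖v - c‖ ≤ ‖u - c‖ := by
  have hobtuse := real_inner_sub_sub_nonpos_of_forall_norm_sub_le hD hv hmin
  have hexpand : ‖u - c‖ ^ 2 = ‖u - v‖ ^ 2 - 2 * ⟪u - v, c - v⟫ + ‖v - c‖ ^ 2 := by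
    rw [← sub_sub_sub_cancel_right u c v, norm_sub_sq_real, norm_sub_rev c v]
  refine le_of_sq_le_sq ?_ (norm_nonneg _)
  linarith [sq_nonneg ‖u - v‖]

theorem norm_add_smul_sub_sq (x g c : E) (t : ℝ) :
    ‖x + t • g - c‖ ^ 2 = ‖x - c‖ ^ 2 + 2 * (t * ⟪x - c, g⟫) + t ^ 2 * ‖g‖ ^ 2 := by
  rw [add_sub_right_comm, norm_add_sq_real, real_inner_smul_right, norm_smul, mul_pow,
    Real.norm_eq_abs, sq_abs]

theorem norm_sub_sq_le_add_sum_of_forall_norm_sub_le {k : ℕ} {a : ℕ → ℝ}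
    {F lam : ℕ → E} (hstep : ∀ j < k, ‖lam (j + 1) - c‖ ≤ ‖lam j + a j • F j - c‖) :
    ‖lam k - c‖ ^ 2 ≤ ‖lam 0 - c‖ ^ 2 + 2 * ∑ j ∈ Finset.range k, a j * ⟪lam j - c, F j⟫ +
      ∑ j ∈ Finset.range k, a j ^ 2 * ‖F j‖ ^ 2 := by
  have hincr : ∀ j ∈ Finset.range k, ‖lam (j + 1) - c‖ ^ 2 - ‖lam j - c‖ ^ 2 ≤
      2 * (a j * ⟪lam j - c, F j⟫) + a j ^ 2 * ‖F j‖ ^ 2 := fun j hj ↦ by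
    have hsq := pow_le_pow_left₀ (norm_nonneg _) (hstep j (Finset.mem_range.1 hj)) 2
    rw [norm_add_smul_sub_sq] at hsq
    linarith
  have hsum := Finset.sum_le_sum hincr
  rw [Finset.sum_range_sub (fun j ↦ ‖lam j - c‖ ^ 2), Finset.sum_add_distrib,
    ← Finset.mul_sum] at hsum
  linarith

theorem stmt2_general (hD : StarConvex ℝ c D) (k : ℕ) (a : ℕ → ℝ) (F : ℕ → E)
    (Lb : ℝ) (hFb : ∀ j < k, ‖F j‖ ≤ Lb) (lam : ℕ → E)
    (hstep : ∀ j < k, lam (j + 1) ∈ D ∧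
      ∀ μ ∈ D, ‖lam (j + 1) - (lam j + a j • F j)‖ ≤ ‖μ - (lam j + a j • F j)‖) :
    -(∑ j ∈ Finset.range k, a j * ⟪lam j - c, F j⟫) ≤
      (1 / 2) * ‖lam 0 - c‖ ^ 2 + (1 / 2) * Lb ^ 2 * ∑ j ∈ Finset.range k, (a j) ^ 2 := by
  have htelescope : ‖lam k - c‖ ^ 2 ≤ ‖lam 0 - c‖ ^ 2 +
      2 * ∑ j ∈ Finset.range k, a j * ⟪lam j - c, F j⟫ +
      ∑ j ∈ Finset.range k, a j ^ 2 * ‖F j‖ ^ 2 :=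
    norm_sub_sq_le_add_sum_of_forall_norm_sub_le fun j hj ↦
      norm_sub_le_norm_sub_of_forall_norm_sub_le hD (hstep j hj).1 (hstep j hj).2
  have hbound : ∑ j ∈ Finset.range k, a j ^ 2 * ‖F j‖ ^ 2 ≤
      Lb ^ 2 * ∑ j ∈ Finset.range k, a j ^ 2 := by
    rw [mul_comm, Finset.sum_mul]
    gcongr with j hj
    exact hFb j (Finset.mem_range.1 hj)
  linarith [sq_nonneg ‖lam k - c‖]

end StarConvex

/-- telescoped dual bound, equations (79)–(80) of Appendix C. -/
theorem stmt2 {n : ℕ}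
    (Dset : Set (EuclideanSpace ℝ (Fin n)))
    (hDcl : IsClosed Dset) (hDcv : Convex ℝ Dset) (hD0 : (0 : EuclideanSpace ℝ (Fin n)) ∈ Dset)
    (k : ℕ) (a : ℕ → ℝ) (ha : ∀ j, 0 ≤ a j)
    (F : ℕ → EuclideanSpace ℝ (Fin n)) (Lb : ℝ)
    (hFb : ∀ j < k, ‖F j‖ ≤ Lb)
    (lam : ℕ → EuclideanSpace ℝ (Fin n))
    (hlam0 : lam 0 ∈ Dset)
    -- λ^{j+1} is the Euclidean projection of λ^j + a_j F^j onto D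
    (hstep : ∀ j < k, lam (j + 1) ∈ Dset ∧
      ∀ μ ∈ Dset, ‖lam (j + 1) - (lam j + a j • F j)‖ ≤ ‖μ - (lam j + a j • F j)‖) :
    -(∑ j ∈ Finset.range k, a j * ⟪lam j, F j⟫) ≤
      (1 / 2) * ‖lam 0‖ ^ 2 + (1 / 2) * Lb ^ 2 * ∑ j ∈ Finset.range k, (a j) ^ 2 := by
  simpa using stmt2_general (hDcv.starConvex hD0) k a F Lb hFb lam hstep
end

section
/- Under the stochastic DPD-AirComp setup holding for every round j = 0, …, k−1, assume additionally that (x*, λ*) is a saddle point of L over X × D, i.e., L(x*, λ) ≤ L(x*, λ*) ≤ L(x, λ*) for all x ∈ X and λ ∈ D, that λ^j ∈ D a.s., and let Z_k := Σ_{j=0}^{k−1} a_j and Ā_j := E[|A^j|]. Then (1/Z_k) E[Σ_{j=0}^{k−1} a_j L(x^j, λ^j)] − L(x*, λ*) ≤ (1/Z_k) ( R G Σ_{j=0}^{k−1} (N − Ā_j) a_j + (β σ² + L_b²) Σ_{j=0}^{k−1} a_j² + 2 L_b G Σ_{j=0}^{k−1} (N − Ā_j) a_j² + E[‖x^0 −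 x*‖²] + G² Σ_{j=0}^{k−1} E[(N − |A^j|)²] a_j² ). -/
/-!
The energy argument for projected subgradient steps, with energy `‖x j - xs‖ ^ 2`. The direction
`v` actually used differs from the exact subgradient of the Lagrangian by the terms of the absent
users, hence by at most `G * (n - |A j|)` in norm. Nonexpansiveness of the projection and expansion
of the square bound `2 * a j` times the Lagrangian gap by the decrease of the energy, up to errors
from the absent users and the noise; taking expectations and telescoping gives the bound.

The subgradient selections need not be measurable, so independence cannot be used to discard the
cross term between the direction `v` and the noise `m`. It is absorbed instead by
`‖v + m‖ ^ 2 ≤ 2 * (‖v‖ ^ 2 + ‖m‖ ^ 2)`, and the factor `2` is compensated by the `2 * a j` in front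
of the Lagrangian gap. Independence enters only through the cross term of the noise with `x j - xs`.
-/

open scoped RealInnerProductSpace
open MeasureTheory

instance {N : ℕ} : MeasurableSpace (Finset (Fin N)) := ⊤

section NearestPoint

variable {E : Type*} [NormedAddCommGroup E] {X : Set E} {z p y : E}

/-- `p` is a nearest point of `X` to `z`. For closed convex `X` this says `p = P_X[z]`; being a
relation, it needs no completeness of `X` to make sense. -/
def IsNearestPoint (X : Set E) (z p : E) : Prop :=
  p ∈ X ∧ ∀ q ∈ X, ‖p - z‖ ≤ ‖q - z‖

namespace IsNearestPoint

lemma norm_sub_eq_iInf (h : IsNearestPoint X z p) : ‖z - p‖ = ⨅ q : X, ‖z - q‖ := by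
  have : Nonempty X := ⟨⟨p, h.1⟩⟩
  have hbdd : BddBelow (Set.range fun q : X => ‖z - q‖) :=
    ⟨0, Set.forall_mem_range.2 fun _ => norm_nonneg _⟩
  refine le_antisymm (le_ciInf fun q => ?_) (ciInf_le hbdd ⟨p, h.1⟩)
  simpa only [norm_sub_rev z] using h.2 q q.2

variable [InnerProductSpace ℝ E]

lemma inner_sub_le_zero (h : IsNearestPoint X z p) (hX : Convex ℝ X) (hy : y ∈ X) :
    ⟪z - p, y - p⟫ ≤ 0 :=
  (norm_eq_iInf_iff_real_inner_le_zero hX h.1).1 h.norm_sub_eq_iInf y hy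

lemma norm_sub_le (h : IsNearestPoint X z p) (hX : Convex ℝ X) (hy : y ∈ X) :
    ‖p - y‖ ≤ ‖z - y‖ := by
  have hexpand : ‖z - y‖ ^ 2 = ‖z - p‖ ^ 2 - 2 * ⟪z - p, y - p⟫ + ‖p - y‖ ^ 2 := by
    rw [norm_sub_rev p y, ← norm_sub_sq_real, sub_sub_sub_cancel_right]
  refine le_of_sq_le_sq ?_ (norm_nonneg _)
  linarith [h.inner_sub_le_zero hX hy, sq_nonneg ‖z - p‖]

end IsNearestPoint

end NearestPoint

section Subgradient

variable {E ι : Type*} [NormedAddCommGroup E] [InnerProductSpace ℝ E] {X : Set E} {x : E}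

/-- `v` is a subgradient at `x` of the restriction of `f` to `X`. -/
def IsSubgradientWithinAt (f : E → ℝ) (v : E) (X : Set E) (x : E) : Prop :=
  ∀ y ∈ X, f x + ⟪v, y - x⟫ ≤ f y

namespace IsSubgradientWithinAt

variable {f h : E → ℝ} {v w y : E}

lemma sub_le_inner (hv : IsSubgradientWithinAt f v X x) (hy : y ∈ X) :
    f x - f y ≤ ⟪v, x - y⟫ := by
  rw [← neg_sub y x, inner_neg_right]
  linarith [hv y hy]

lemma add (hv : IsSubgradientWithinAt f v X x) (hw : IsSubgradientWithinAt h w X x) :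
    IsSubgradientWithinAt (fun y => f y + h y) (v + w) X x := fun y hy => by
  rw [inner_add_left]
  linarith [hv y hy, hw y hy]

lemma const_smul {c : ℝ} (hv : IsSubgradientWithinAt f v X x) (hc : 0 ≤ c) :
    IsSubgradientWithinAt (fun y => c * f y) (c • v) X x := fun y hy => by
  rw [real_inner_smul_left, ← mul_add]
  exact mul_le_mul_of_nonneg_left (hv y hy) hc

lemma sum {s : Finset ι} {f : ι → E → ℝ} {v : ι → E}
    (hv : ∀ i ∈ s, IsSubgradientWithinAt (f i) (v i) X x) :
    IsSubgradientWithinAt (fun y => ∑ i ∈ s, f i y) (∑ i ∈ s, v i) X x := fun y hy => by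
  rw [sum_inner, ← Finset.sum_add_distrib]
  exact Finset.sum_le_sum fun i hi => hv i hi y hy

end IsSubgradientWithinAt

/-- The Lagrangian `L(x, μ)` of the objective `f₀` and the constraint functions `f i`. -/
def lagrangian [Fintype ι] (f₀ : E → ℝ) (f : ι → E → ℝ) (x : E) (μ : ι → ℝ) : ℝ :=
  f₀ x + ∑ i, μ i * f i x

/-- The search direction at `x` when only the users in `S` transmit their weighted subgradient. For
`S = Finset.univ` it is the exact subgradient of the Lagrangian. -/
def partialSubgradient (g₀ : E → E) (g : ι → E → E) (S : Finset ι) (x : E) (μ : ι → ℝ) : E :=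
  g₀ x + ∑ i ∈ S, μ i • g i x

variable [Fintype ι] {g₀ : E → E} {g : ι → E → E} {μ : ι → ℝ}

lemma isSubgradientWithinAt_lagrangian {f₀ : E → ℝ} {f : ι → E → ℝ}
    (hg₀ : IsSubgradientWithinAt f₀ (g₀ x) X x)
    (hg : ∀ i, IsSubgradientWithinAt (f i) (g i x) X x) (hμ : ∀ i, 0 ≤ μ i) :
    IsSubgradientWithinAt (fun y => lagrangian f₀ f y μ)
      (partialSubgradient g₀ g Finset.univ x μ) X x :=
  hg₀.add (.sum fun i _ => (hg i).const_smul (hμ i))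

lemma norm_partialSubgradient_univ_sub_le {G : ℝ} (hG : ∀ i, ‖μ i • g i x‖ ≤ G) (S : Finset ι) :
    ‖partialSubgradient g₀ g Finset.univ x μ - partialSubgradient g₀ g S x μ‖
      ≤ G * (Fintype.card ι - S.card) := by
  classical
  have habsent : partialSubgradient g₀ g Finset.univ x μ - partialSubgradient g₀ g S x μ
      = ∑ i ∈ Sᶜ, μ i • g i x := by
    rw [partialSubgradient, partialSubgradient, add_sub_add_left_eq_sub, sub_eq_iff_eq_add',
      Finset.sum_add_sum_compl]
  calc ‖partialSubgradient g₀ g Finset.univ x μ - partialSubgradient g₀ g S x μ‖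
      ≤ ∑ _i ∈ Sᶜ, G := habsent ▸ norm_sum_le_of_le _ fun i _ => hG i
    _ = G * (Fintype.card ι - S.card) := by
      rw [Finset.sum_const, nsmul_eq_mul, Finset.card_compl, Nat.cast_sub S.card_le_univ, mul_comm]

end Subgradient

section InexactStep

variable {E : Type*} [NormedAddCommGroup E] [InnerProductSpace ℝ E]

lemma norm_sub_smul_add_sq_le {z u v m : E} {a b c R : ℝ} (ha : 0 ≤ a) (hu : ‖u‖ ≤ b)
    (huv : ‖u - v‖ ≤ c) (hz : ‖z‖ ≤ R) :
    ‖z - a • (v + m)‖ ^ 2 ≤ ‖z‖ ^ 2 - 2 * a * ⟪u, z⟫ - 2 * a * ⟪z, m⟫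
      + 2 * a * (R * c) + 2 * a ^ 2 * ((b + c) ^ 2 + ‖m‖ ^ 2) := by
  have hexpand : ‖z - a • (v + m)‖ ^ 2
      = ‖z‖ ^ 2 - 2 * a * (⟪u, z⟫ - ⟪u - v, z⟫ + ⟪z, m⟫) + a ^ 2 * ‖v + m‖ ^ 2 := by
    rw [norm_sub_sq_real, inner_smul_right, inner_add_right, norm_smul, mul_pow,
      Real.norm_eq_abs, sq_abs, inner_sub_left, real_inner_comm v]
    ring
  have hmissing : ⟪u - v, z⟫ ≤ R * c :=
    (real_inner_le_norm _ _).trans <| (mul_comm _ _).trans_le <|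
      mul_le_mul hz huv (norm_nonneg _) ((norm_nonneg _).trans hz)
  have hv : ‖v‖ ≤ b + c := by
    simpa only [sub_sub_cancel] using (norm_sub_le u (u - v)).trans (add_le_add hu huv)
  have hnoise : ‖v + m‖ ^ 2 ≤ 2 * ((b + c) ^ 2 + ‖m‖ ^ 2) := by
    calc ‖v + m‖ ^ 2 ≤ (‖v‖ + ‖m‖) ^ 2 := by gcongr; exact norm_add_le v m
      _ ≤ 2 * (‖v‖ ^ 2 + ‖m‖ ^ 2) := add_sq_le
      _ ≤ 2 * ((b + c) ^ 2 + ‖m‖ ^ 2) := by gcongr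
  linarith [mul_le_mul_of_nonneg_left hmissing ha, mul_le_mul_of_nonneg_left hnoise (sq_nonneg a)]

variable {Ω : Type*} [MeasurableSpace Ω] {P : Measure Ω}

lemma integrable_inner_of_memLp_two {z m : Ω → E} (hz : MemLp z 2 P) (hm : MemLp m 2 P) :
    Integrable (fun ω => ⟪z ω, m ω⟫) P :=
  memLp_one_iff_integrable.1 <| (innerSL ℝ).memLp_of_bilin 1 hz hm

lemma integral_inner_eq_zero_of_indepFun [CompleteSpace E] [MeasurableSpace E] [BorelSpace E]
    {Y W : Ω → E} (h : ProbabilityTheory.IndepFun Y W P) (hY : Integrable Y P)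
    (hW : Integrable W P) (hW0 : ∫ ω, W ω ∂P = 0) : ∫ ω, ⟪Y ω, W ω⟫ ∂P = 0 := by
  rw [← map_zero (innerSL ℝ (∫ ω, Y ω ∂P)), ← hW0]
  exact h.integral_bilin hY hW (innerSL ℝ)

lemma mul_integral_le_of_inexact_step [IsFiniteMeasure P] {x p u v m : Ω → E} {Δ c : Ω → ℝ}
    {xs : E} {a b R : ℝ} (ha : 0 ≤ a)
    (hx : MemLp (fun ω => x ω - xs) 2 P) (hp : MemLp (fun ω => p ω - xs) 2 P)
    (hm : MemLp m 2 P) (hc : MemLp c 2 P) (hΔ : Integrable Δ P)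
    (horth : ∫ ω, ⟪x ω - xs, m ω⟫ ∂P = 0)
    (hstep : ∀ᵐ ω ∂P, ‖p ω - xs‖ ≤ ‖x ω - a • (v ω + m ω) - xs‖)
    (hgap : ∀ᵐ ω ∂P, Δ ω ≤ ⟪u ω, x ω - xs⟫) (hu : ∀ᵐ ω ∂P, ‖u ω‖ ≤ b)
    (huv : ∀ᵐ ω ∂P, ‖u ω - v ω‖ ≤ c ω) (hR : ∀ᵐ ω ∂P, ‖x ω - xs‖ ≤ R) :
    a * ∫ ω, Δ ω ∂P
      ≤ 1 / 2 * (∫ ω, ‖x ω - xs‖ ^ 2 ∂P) - 1 / 2 * (∫ ω, ‖p ω - xs‖ ^ 2 ∂P)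
        + (a * (R * ∫ ω, c ω ∂P)
          + a ^ 2 * (∫ ω, (b + c ω) ^ 2 ∂P + ∫ ω, ‖m ω‖ ^ 2 ∂P)) := by
  have hpointwise : ∀ᵐ ω ∂P, 2 * a * Δ ω + ‖p ω - xs‖ ^ 2 + 2 * a * ⟪x ω - xs, m ω⟫
      ≤ ‖x ω - xs‖ ^ 2 + 2 * a * (R * c ω) + 2 * a ^ 2 * ((b + c ω) ^ 2 + ‖m ω‖ ^ 2) := by
    filter_upwards [hstep, hgap, hu, huv, hR] with ω hstep hgap hu huv hR
    have henergy := pow_le_pow_left₀ (norm_nonneg _) hstep 2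
    rw [sub_right_comm] at henergy
    linarith [norm_sub_smul_add_sq_le (m := m ω) ha hu huv hR, mul_le_mul_of_nonneg_left hgap ha]
  have hxsq := hx.integrable_norm_pow two_ne_zero
  have hpsq := hp.integrable_norm_pow two_ne_zero
  have hmsq := hm.integrable_norm_pow two_ne_zero
  have hcross := (integrable_inner_of_memLp_two hx hm).const_mul (2 * a)
  have hmissing := ((hc.integrable one_le_two).const_mul R).const_mul (2 * a)
  have hbc : Integrable (fun ω => (b + c ω) ^ 2) P := ((memLp_const b).add hc).integrable_sq
  have hdirection := (hbc.fun_add hmsq).const_mul (2 * a ^ 2)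
  have hint := integral_mono_ae (((hΔ.const_mul (2 * a)).fun_add hpsq).fun_add hcross)
    ((hxsq.fun_add hmissing).fun_add hdirection) hpointwise
  rw [integral_add ((hΔ.const_mul _).fun_add hpsq) hcross, integral_add (hΔ.const_mul _) hpsq,
    integral_add (hxsq.fun_add hmissing) hdirection, integral_add hxsq hmissing] at hint
  simp only [integral_const_mul, integral_add hbc hmsq, horth] at hint
  linarith

end InexactStep

section Round

variable {E ι Ω : Type*} [NormedAddCommGroup E] [InnerProductSpace ℝ E] [MeasurableSpace Ω]
  {P : Measure Ω}

lemma memLp_card [Finite ι] [IsFiniteMeasure P] {S : Ω → Finset ι}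
    (hS : AEStronglyMeasurable (fun ω => ((S ω).card : ℝ)) P) (q : ENNReal) :
    MemLp (fun ω => ((S ω).card : ℝ)) q P := by
  have := Fintype.ofFinite ι
  refine .of_bound hS (Fintype.card ι) (.of_forall fun ω => ?_)
  rw [Real.norm_natCast]
  exact Nat.cast_le.2 (S ω).card_le_univ

variable [Fintype ι] [IsProbabilityMeasure P]

lemma integral_const_add_const_mul_sq {Y : Ω → ℝ} (hY : MemLp Y 2 P) (b G : ℝ) :
    ∫ ω, (b + G * Y ω) ^ 2 ∂P
      = b ^ 2 + 2 * b * G * (∫ ω, Y ω ∂P) + G ^ 2 * ∫ ω, Y ω ^ 2 ∂P := by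
  have hlin : Integrable (fun ω => 2 * b * G * Y ω) P :=
    (hY.integrable one_le_two).const_mul _
  calc ∫ ω, (b + G * Y ω) ^ 2 ∂P
      = ∫ ω, (b ^ 2 + 2 * b * G * Y ω + G ^ 2 * Y ω ^ 2) ∂P := by
        congr with ω
        ring
    _ = b ^ 2 + 2 * b * G * (∫ ω, Y ω ∂P) + G ^ 2 * ∫ ω, Y ω ^ 2 ∂P := by
        rw [integral_add ((integrable_const _).fun_add hlin) (hY.integrable_sq.const_mul _),
          integral_add (integrable_const _) hlin, integral_const_mul, integral_const_mul,
          integral_const, probReal_univ, one_smul]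

lemma mul_integral_lagrangian_sub_le [CompleteSpace E] [MeasurableSpace E] [BorelSpace E]
    {X : Set E} {f₀ : E → ℝ} {f : ι → E → ℝ} {g₀ : E → E} {g : ι → E → E}
    {x p ν : Ω → E} {μ : Ω → ι → ℝ} {S : Ω → Finset ι} {xs : E} {a β σ G b R v : ℝ}
    (hX : Convex ℝ X) (hg₀ : ∀ y ∈ X, IsSubgradientWithinAt f₀ (g₀ y) X y)
    (hg : ∀ i, ∀ y ∈ X, IsSubgradientWithinAt (f i) (g i y) X y)
    (ha : 0 ≤ a) (hβ : 0 ≤ β) (hxs : xs ∈ X) (hR : ∀ y ∈ X, ‖y - xs‖ ≤ R)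
    (hxm : AEStronglyMeasurable x P) (hpm : AEStronglyMeasurable p P)
    (hS : AEStronglyMeasurable (fun ω => ((S ω).card : ℝ)) P)
    (hν : MemLp ν 2 P) (hν0 : ∫ ω, ν ω ∂P = 0) (hνσ : ∫ ω, ‖ν ω‖ ^ 2 ∂P = σ ^ 2)
    (hind : ProbabilityTheory.IndepFun x ν P)
    (hL : Integrable (fun ω => lagrangian f₀ f (x ω) (μ ω)) P)
    (hxX : ∀ᵐ ω ∂P, x ω ∈ X) (hμ : ∀ᵐ ω ∂P, ∀ i, 0 ≤ μ ω i)
    (hv : ∀ᵐ ω ∂P, lagrangian f₀ f xs (μ ω) ≤ v)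
    (hp : ∀ᵐ ω ∂P, IsNearestPoint X
      (x ω - a • (partialSubgradient g₀ g (S ω) (x ω) (μ ω) + √β • ν ω)) (p ω))
    (hG : ∀ᵐ ω ∂P, ∀ i, ‖μ ω i • g i (x ω)‖ ≤ G)
    (hb : ∀ᵐ ω ∂P, ‖partialSubgradient g₀ g Finset.univ (x ω) (μ ω)‖ ≤ b) :
    a * (∫ ω, lagrangian f₀ f (x ω) (μ ω) ∂P - v)
      ≤ 1 / 2 * (∫ ω, ‖x ω - xs‖ ^ 2 ∂P) - 1 / 2 * (∫ ω, ‖p ω - xs‖ ^ 2 ∂P)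
        + (R * G * ((Fintype.card ι - ∫ ω, ((S ω).card : ℝ) ∂P) * a)
          + (β * σ ^ 2 + b ^ 2) * a ^ 2
          + 2 * b * G * ((Fintype.card ι - ∫ ω, ((S ω).card : ℝ) ∂P) * a ^ 2)
          + G ^ 2 * ((∫ ω, (Fintype.card ι - (S ω).card : ℝ) ^ 2 ∂P) * a ^ 2)) := by
  have hxR : ∀ᵐ ω ∂P, ‖x ω - xs‖ ≤ R := hxX.mono fun ω => hR _
  have hpR : ∀ᵐ ω ∂P, ‖p ω - xs‖ ≤ R := hp.mono fun ω h => hR _ h.1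
  have hx2 : MemLp (fun ω => x ω - xs) 2 P := .of_bound (hxm.sub aestronglyMeasurable_const) R hxR
  have hp2 : MemLp (fun ω => p ω - xs) 2 P := .of_bound (hpm.sub aestronglyMeasurable_const) R hpR
  have hm2 : MemLp (fun ω => √β • ν ω) 2 P := hν.const_smul √β
  have hcard := memLp_card hS 2
  have hY : MemLp (fun ω => (Fintype.card ι - (S ω).card : ℝ)) 2 P := (memLp_const _).sub hcard
  have hindep : ProbabilityTheory.IndepFun (fun ω => x ω - xs) ν P :=
    hind.comp (continuous_sub_right xs).measurable measurable_id
  have horth : ∫ ω, ⟪x ω - xs, √β • ν ω⟫ ∂P = 0 := by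
    simp only [inner_smul_right, integral_const_mul, integral_inner_eq_zero_of_indepFun hindep
      (hx2.integrable one_le_two) (hν.integrable one_le_two) hν0, mul_zero]
  have hgap : ∀ᵐ ω ∂P, lagrangian f₀ f (x ω) (μ ω) - v
      ≤ ⟪partialSubgradient g₀ g Finset.univ (x ω) (μ ω), x ω - xs⟫ := by
    filter_upwards [hxX, hμ, hv] with ω hx hμ hv
    exact (sub_le_sub_left hv _).trans <|
      (isSubgradientWithinAt_lagrangian (hg₀ _ hx) (hg · _ hx) hμ).sub_le_inner hxs
  have hnoise : ∫ ω, ‖√β • ν ω‖ ^ 2 ∂P = β * σ ^ 2 := by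
    simp only [norm_smul, mul_pow, integral_const_mul, hνσ, Real.norm_eq_abs, sq_abs,
      Real.sq_sqrt hβ]
  have hstep := mul_integral_le_of_inexact_step ha hx2 hp2 hm2 (hY.const_mul G)
    (hL.sub (integrable_const v)) horth (hp.mono fun ω h => h.norm_sub_le hX hxs) hgap hb
    (hG.mono fun ω h => norm_partialSubgradient_univ_sub_le h (S ω)) hxR
  rw [integral_sub' hL (integrable_const v), integral_const_add_const_mul_sq hY, integral_const_mul,
    integral_sub (integrable_const _) (hcard.integrable one_le_two), hnoise] at hstep
  simp only [integral_const, probReal_univ, one_smul] at hstep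
  linarith

end Round

lemma weighted_average_sub_le_of_telescope {k : ℕ} {a u e b : ℕ → ℝ} {v : ℝ}
    (ha : 0 < ∑ j ∈ Finset.range k, a j) (he : 0 ≤ e k)
    (h : ∀ j < k, a j * (u j - v) ≤ e j - e (j + 1) + b j) :
    (1 / ∑ j ∈ Finset.range k, a j) * ∑ j ∈ Finset.range k, a j * u j - v
      ≤ (1 / ∑ j ∈ Finset.range k, a j) * (e 0 + ∑ j ∈ Finset.range k, b j) := by
  have hsum : ∑ j ∈ Finset.range k, a j * (u j - v) ≤ e 0 + ∑ j ∈ Finset.range k, b j := by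
    calc ∑ j ∈ Finset.range k, a j * (u j - v)
        ≤ ∑ j ∈ Finset.range k, (e j - e (j + 1) + b j) :=
          Finset.sum_le_sum fun j hj => h j (Finset.mem_range.1 hj)
      _ = e 0 - e k + ∑ j ∈ Finset.range k, b j := by
          rw [Finset.sum_add_distrib, Finset.sum_range_sub']
      _ ≤ e 0 + ∑ j ∈ Finset.range k, b j := by gcongr; exact sub_le_self _ he
  calc (1 / ∑ j ∈ Finset.range k, a j) * ∑ j ∈ Finset.range k, a j * u j - v
      = (1 / ∑ j ∈ Finset.range k, a j) * ∑ j ∈ Finset.range k, a j * (u j - v) := by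
        simp only [mul_sub, Finset.sum_sub_distrib, ← Finset.sum_mul]
        field_simp
    _ ≤ (1 / ∑ j ∈ Finset.range k, a j) * (e 0 + ∑ j ∈ Finset.range k, b j) := by gcongr

theorem stmt4_general {E ι Ω : Type*} [NormedAddCommGroup E] [InnerProductSpace ℝ E]
    [CompleteSpace E] [MeasurableSpace E] [BorelSpace E] [Fintype ι] [MeasurableSpace Ω]
    {P : Measure Ω} [IsProbabilityMeasure P] {X : Set E} {D : Set (ι → ℝ)}
    {f₀ : E → ℝ} {f : ι → E → ℝ} {g₀ : E → E} {g : ι → E → E} {k : ℕ} {a : ℕ → ℝ}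
    {x ν : ℕ → Ω → E} {μ : ℕ → Ω → ι → ℝ} {S : ℕ → Ω → Finset ι}
    {xs : E} {μs : ι → ℝ} {β σ G b R : ℝ}
    (hX : Convex ℝ X) (hD : ∀ μ ∈ D, ∀ i, 0 ≤ μ i)
    (hg₀ : ∀ y ∈ X, IsSubgradientWithinAt f₀ (g₀ y) X y)
    (hg : ∀ i, ∀ y ∈ X, IsSubgradientWithinAt (f i) (g i y) X y)
    (hk : 0 < k) (ha : ∀ j < k, 0 < a j) (hβ : 0 ≤ β)
    (hxs : xs ∈ X) (hμs : ∀ μ ∈ D, lagrangian f₀ f xs μ ≤ lagrangian f₀ f xs μs)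
    (hR : ∀ y ∈ X, ‖y - xs‖ ≤ R)
    (hx₀ : ∀ᵐ ω ∂P, x 0 ω ∈ X) (hμD : ∀ j < k, ∀ᵐ ω ∂P, μ j ω ∈ D)
    (hxm : ∀ j ≤ k, AEStronglyMeasurable (x j) P)
    (hS : ∀ j < k, AEStronglyMeasurable (fun ω => ((S j ω).card : ℝ)) P)
    (hν : ∀ j < k, MemLp (ν j) 2 P) (hν0 : ∀ j < k, ∫ ω, ν j ω ∂P = 0)
    (hνσ : ∀ j < k, ∫ ω, ‖ν j ω‖ ^ 2 ∂P = σ ^ 2)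
    (hind : ∀ j < k, ProbabilityTheory.IndepFun (x j) (ν j) P)
    (hL : ∀ j < k, Integrable (fun ω => lagrangian f₀ f (x j ω) (μ j ω)) P)
    (hupd : ∀ j < k, ∀ᵐ ω ∂P, IsNearestPoint X
      (x j ω - a j • (partialSubgradient g₀ g (S j ω) (x j ω) (μ j ω) + √β • ν j ω))
      (x (j + 1) ω))
    (hG : ∀ j < k, ∀ᵐ ω ∂P, ∀ i, ‖μ j ω i • g i (x j ω)‖ ≤ G)
    (hb : ∀ j < k, ∀ᵐ ω ∂P, ‖partialSubgradient g₀ g Finset.univ (x j ω) (μ j ω)‖ ≤ b) :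
    (1 / ∑ j ∈ Finset.range k, a j) *
        (∫ ω, ∑ j ∈ Finset.range k, a j * lagrangian f₀ f (x j ω) (μ j ω) ∂P)
        - lagrangian f₀ f xs μs ≤
      (1 / ∑ j ∈ Finset.range k, a j) *
        (R * G * ∑ j ∈ Finset.range k, (Fintype.card ι - ∫ ω, ((S j ω).card : ℝ) ∂P) * a j
          + (β * σ ^ 2 + b ^ 2) * ∑ j ∈ Finset.range k, a j ^ 2
          + 2 * b * G *
            ∑ j ∈ Finset.range k, (Fintype.card ι - ∫ ω, ((S j ω).card : ℝ) ∂P) * a j ^ 2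
          + (∫ ω, ‖x 0 ω - xs‖ ^ 2 ∂P)
          + G ^ 2 * ∑ j ∈ Finset.range k,
              (∫ ω, (Fintype.card ι - (S j ω).card : ℝ) ^ 2 ∂P) * a j ^ 2) := by
  have hZ : 0 < ∑ j ∈ Finset.range k, a j :=
    Finset.sum_pos (fun j hj => ha j (Finset.mem_range.1 hj)) ⟨0, Finset.mem_range.2 hk⟩
  have hxX : ∀ j < k, ∀ᵐ ω ∂P, x j ω ∈ X
    | 0, _ => hx₀
    | j + 1, hj => (hupd j (j.lt_succ_self.trans hj)).mono fun _ h => h.1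
  have henergy : ∀ j, 0 ≤ ∫ ω, ‖x j ω - xs‖ ^ 2 ∂P := fun j => integral_nonneg fun ω => sq_nonneg _
  have hround := fun j (hj : j < k) =>
    mul_integral_lagrangian_sub_le hX hg₀ hg (ha j hj).le hβ hxs hR (hxm j hj.le)
      (hxm (j + 1) hj) (hS j hj) (hν j hj) (hν0 j hj) (hνσ j hj) (hind j hj) (hL j hj)
      (hxX j hj) ((hμD j hj).mono fun ω => hD _) ((hμD j hj).mono fun ω => hμs _) (hupd j hj)
      (hG j hj) (hb j hj)
  have haverage := weighted_average_sub_le_of_telescope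
    (e := fun j => 1 / 2 * ∫ ω, ‖x j ω - xs‖ ^ 2 ∂P) hZ
    (mul_nonneg one_half_pos.le (henergy k)) hround
  rw [integral_finsetSum _ fun j hj => (hL j (Finset.mem_range.1 hj)).const_mul (a j)]
  simp only [integral_const_mul]
  refine haverage.trans (mul_le_mul_of_nonneg_left ?_ (one_div_pos.2 hZ).le)
  simp only [Finset.sum_add_distrib, ← Finset.mul_sum]
  linarith [henergy 0]

/-- Lemma 2 of the paper: expected bound on the weighted running
average of the Lagrangian values under the stochastic DPD-AirComp setup. -/
theorem stmt4 {d n : ℕ}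
    {Ω : Type*} [MeasurableSpace Ω] (P : Measure Ω) [IsProbabilityMeasure P]
    -- the sets X and D
    (X : Set (EuclideanSpace ℝ (Fin d)))
    (hXne : X.Nonempty) (hXcp : IsCompact X) (hXcv : Convex ℝ X)
    (Dset : Set (EuclideanSpace ℝ (Fin n)))
    (hDcl : IsClosed Dset) (hDcv : Convex ℝ Dset)
    (hDpos : ∀ μ ∈ Dset, ∀ i, 0 ≤ μ i)
    -- convex objective and constraint functions, the Lagrangian
    (f0 : EuclideanSpace ℝ (Fin d) → ℝ)
    (f : Fin n → EuclideanSpace ℝ (Fin d) → ℝ)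
    (hf0 : ConvexOn ℝ Set.univ f0) (hf : ∀ i, ConvexOn ℝ Set.univ (f i))
    (L : EuclideanSpace ℝ (Fin d) → EuclideanSpace ℝ (Fin n) → ℝ)
    (hL : ∀ y μ, L y μ = f0 y + ∑ i, μ i * f i y)
    -- fixed subgradients of f_0 and of each f_i
    (g0 : EuclideanSpace ℝ (Fin d) → EuclideanSpace ℝ (Fin d))
    (g : Fin n → EuclideanSpace ℝ (Fin d) → EuclideanSpace ℝ (Fin d))
    (hg0 : ∀ x y, f0 x + ⟪g0 x, y - x⟫ ≤ f0 y)
    (hg : ∀ i x y, f i x + ⟪g i x, y - x⟫ ≤ f i y)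
    -- constants and the number of rounds
    (k : ℕ) (hk : 0 < k)
    (a : ℕ → ℝ) (ha : ∀ j, 0 < a j)
    (β σ G Lb R : ℝ) (hβ : 0 < β)
    -- the random processes
    (x : ℕ → Ω → EuclideanSpace ℝ (Fin d))
    (l : ℕ → Ω → EuclideanSpace ℝ (Fin n))
    (A : ℕ → Ω → Finset (Fin n))
    (nois : ℕ → Ω → EuclideanSpace ℝ (Fin d))
    (hxX : ∀ j ω, x j ω ∈ X) (hlD : ∀ j ω, l j ω ∈ Dset)
    (hmx : ∀ j, Measurable (x j)) (hml : ∀ j, Measurable (l j))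
    (hmA : ∀ j, Measurable (A j)) (hmn : ∀ j, Measurable (nois j))
    -- for each round j < k : noise independent of (x^j, λ^j, A^j), zero mean,
    -- variance σ², and the projected primal update
    (hindep : ∀ j < k,
      ProbabilityTheory.IndepFun (nois j) (fun ω => (x j ω, l j ω, A j ω)) P)
    (hn0 : ∀ j < k, ∫ ω, nois j ω ∂P = 0)
    (hnvar : ∀ j < k, ∫ ω, ‖nois j ω‖ ^ 2 ∂P = σ ^ 2)
    (hnint : ∀ j < k, Integrable (nois j) P)
    (hnsq : ∀ j < k, Integrable (fun ω => ‖nois j ω‖ ^ 2) P)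
    (hupd : ∀ j < k, ∀ ω, x (j + 1) ω ∈ X ∧ ∀ y ∈ X,
      ‖x (j + 1) ω - (x j ω - a j • (g0 (x j ω)
          + (∑ i ∈ A j ω, l j ω i • g i (x j ω)) + Real.sqrt β • nois j ω))‖
        ≤ ‖y - (x j ω - a j • (g0 (x j ω)
          + (∑ i ∈ A j ω, l j ω i • g i (x j ω)) + Real.sqrt β • nois j ω))‖)
    -- a.s. bounds
    (hG : ∀ j < k, ∀ᵐ ω ∂P, ∀ i, ‖l j ω i • g i (x j ω)‖ ≤ G)
    (hLb : ∀ j < k, ∀ᵐ ω ∂P, ‖g0 (x j ω) + ∑ i, l j ω i • g i (x j ω)‖ ≤ Lb)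
    -- saddle point (x*, λ*) of L over X × D
    (xstar : EuclideanSpace ℝ (Fin d)) (hxstarX : xstar ∈ X)
    (lamstar : EuclideanSpace ℝ (Fin n)) (hlamstarD : lamstar ∈ Dset)
    (hsaddle : ∀ y ∈ X, ∀ μ ∈ Dset,
      L xstar μ ≤ L xstar lamstar ∧ L xstar lamstar ≤ L y lamstar)
    (hR : ∀ y ∈ X, ‖y - xstar‖ ≤ R)
    -- abbreviations Z_k and Ā_j
    (Z : ℝ) (hZ : Z = ∑ j ∈ Finset.range k, a j)
    (Abar : ℕ → ℝ) (hAbar : ∀ j, Abar j = ∫ ω, ((A j ω).card : ℝ) ∂P)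
    -- integrability of the quantities appearing in the bound
    (hint1 : ∀ j < k, Integrable (fun ω => ‖x j ω - xstar‖ ^ 2) P)
    (hint2 : ∀ j < k, Integrable (fun ω => L (x j ω) (l j ω)) P)
    (hint3 : ∀ j < k, Integrable (fun ω => L xstar (l j ω)) P)
    (hint4 : ∀ j < k, Integrable (fun ω => ((A j ω).card : ℝ)) P)
    (hint5 : ∀ j < k, Integrable (fun ω => ((n : ℝ) - (A j ω).card) ^ 2) P) :
    (1 / Z) * (∫ ω, (∑ j ∈ Finset.range k, a j * L (x j ω) (l j ω)) ∂P)
        - L xstar lamstar ≤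
      (1 / Z) *
        (R * G * ∑ j ∈ Finset.range k, ((n : ℝ) - Abar j) * a j
          + (β * σ ^ 2 + Lb ^ 2) * ∑ j ∈ Finset.range k, (a j) ^ 2
          + 2 * Lb * G * ∑ j ∈ Finset.range k, ((n : ℝ) - Abar j) * (a j) ^ 2
          + (∫ ω, ‖x 0 ω - xstar‖ ^ 2 ∂P)
          + G ^ 2 * ∑ j ∈ Finset.range k,
              (∫ ω, ((n : ℝ) - (A j ω).card) ^ 2 ∂P) * (a j) ^ 2) := by
  subst hZ
  obtain rfl : L = fun y μ => lagrangian f0 f y μ.ofLp := funext₂ hL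
  simpa only [hAbar, Fintype.card_fin] using stmt4_general (D := WithLp.toLp 2 ⁻¹' Dset)
    (μ := fun j ω => (l j ω).ofLp) hXcv (fun _ => hDpos _) (fun y _ z _ => hg0 y z)
    (fun i y _ z _ => hg i y z) hk (fun j _ => ha j) hβ.le hxstarX
    (fun _ hμ => (hsaddle _ hxstarX _ hμ).1) hR (.of_forall (hxX 0))
    (fun j _ => .of_forall (hlD j)) (fun j _ => (hmx j).aestronglyMeasurable)
    (fun j hj => (hint4 j hj).1)
    (fun j hj => (memLp_two_iff_integrable_sq_norm (hnint j hj).1).2 (hnsq j hj)) hn0 hnvar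
    (fun j hj => ((hindep j hj).comp measurable_id measurable_fst).symm) hint2
    (fun j hj => .of_forall (hupd j hj)) hG hLb
end
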